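/- If α is a simple zero of f and Ω = (1/2){f,x} is bounded and C¹ near α, then the Schwarzian-Newton iteration function g(x) = x - arctan(Ω(x), h(x)) (where h = Φ/Φ') satisfies g(α) = α, g'(α) = g''(α) = g'''(α) = 0 and g⁽⁴⁾(α) = 2Ω'(α); hence the method has convergence order four with error relation ε_{n+1} = (Ω'(α)/12)ε_n⁴ + O(ε_n⁵). -/

import Mathlib

/-- The Schwarzian derivative `{f,x} = f'''/f' - (3/2)(f''/f')²`. -/
noncomputable def schwarzian (f : ℝ → ℝ) (x : ℝ) : ℝ :=
  deriv (deriv (deriv f)) x / deriv f x - (3/2) * (deriv (deriv f) x / deriv f x) ^ 2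

/-- The inverse hyperbolic tangent. -/
noncomputable def artanh (x : ℝ) : ℝ := (1/2) * Real.log ((1 + x) / (1 - x))

/-- The generalized arctangent: `arctan(λ,y) = arctan(√λ y)/√λ` for `λ > 0`, `y` for
`λ = 0`, and `arctanh(√(-λ) y)/√(-λ)` for `λ < 0`. -/
noncomputable def arctanGen (lam y : ℝ) : ℝ :=
  if 0 < lam then Real.arctan (Real.sqrt lam * y) / Real.sqrt lam
  else if lam < 0 then artanh (Real.sqrt (-lam) * y) / Real.sqrt (-lam)
  else y

/-!
Write `arctan(λ, y) = y A(λ y²)` with `A(t) = ∑ (-1)ⁿ tⁿ / (2n + 1)`. Since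
`∂_y arctan(λ, y) = 1 / (1 + λ y²)` and `h` solves the Riccati equation `h' = 1 + Ω h²`, the
variation of `h` contributes exactly `1` to the derivative of `arctan(Ω(x), h(x))`. What remains of
the derivative of `g(x) = x - arctan(Ω(x), h(x))` is `-Ω' ∂_λ arctan(Ω, h) = -h³ Ω' A'(Ω h²)`.
As `h` has a simple zero at `α` with `h'(α) = 1`, and `A'(0) = -1/3`, this product vanishes to third
order at `α` with leading coefficient `Ω'(α) / 3`, so `g⁽⁴⁾(α) = 3! · Ω'(α) / 3`.
-/

open Filter Topology

section PowMul

variable {𝕜 : Type*} [NontriviallyNormedField 𝕜] {h K : 𝕜 → 𝕜} {a : 𝕜}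

theorem tendsto_pow_mul_div_sub_pow {h' : 𝕜} (n : ℕ) (hh : HasDerivAt h h' a) (ha : h a = 0)
    (hK : ContinuousAt K a) :
    Tendsto (fun x => h x ^ n * K x / (x - a) ^ n) (𝓝[≠] a) (𝓝 (h' ^ n * K a)) := by
  refine ((hh.tendsto_slope.pow n).mul hK.continuousWithinAt.tendsto).congr fun x => ?_
  rw [slope_def_field, ha, sub_zero, div_pow, div_mul_eq_mul_div]

theorem hasDerivAt_mul_of_eq_zero {h' : 𝕜} (hh : HasDerivAt h h' a) (ha : h a = 0)
    (hK : ContinuousAt K a) : HasDerivAt (fun x => h x * K x) (h' * K a) a := by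
  rw [hasDerivAt_iff_tendsto_slope]
  simpa [slope_fun_def_field, ha] using tendsto_pow_mul_div_sub_pow 1 hh ha hK

theorem deriv_pow_succ_mul_eventuallyEq (n : ℕ) (hh : ContDiffAt 𝕜 1 h a)
    (hK : ContDiffAt 𝕜 1 K a) :
    deriv (fun x => h x ^ (n + 1) * K x) =ᶠ[𝓝 a]
      fun x => h x ^ n * ((n + 1) * deriv h x * K x + h x * deriv K x) := by
  filter_upwards [hh.eventually (by simp), hK.eventually (by simp)] with x hhx hKx
  have hhx' := (hhx.differentiableAt one_ne_zero).hasDerivAt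
  have hKx' := (hKx.differentiableAt one_ne_zero).hasDerivAt
  refine ((hhx'.fun_pow (n + 1)).fun_mul hKx').deriv.trans ?_
  push_cast [Nat.add_sub_cancel]
  ring

theorem contDiffAt_deriv_pow_succ_mul_cofactor {m : ℕ} (n : ℕ) (hh : ContDiffAt 𝕜 (m + 1) h a)
    (hK : ContDiffAt 𝕜 (m + 1) K a) :
    ContDiffAt 𝕜 m (fun x => (n + 1) * deriv h x * K x + h x * deriv K x) a :=
  ((contDiffAt_const.mul (hh.derivWithin le_rfl)).mul (hK.of_le le_self_add)).add
    ((hh.of_le le_self_add).mul (hK.derivWithin le_rfl))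

theorem iteratedDeriv_pow_mul_eq_zero {k n : ℕ} (hkn : k < n) (hh : ContDiffAt 𝕜 k h a)
    (hK : ContDiffAt 𝕜 k K a) (ha : h a = 0) :
    iteratedDeriv k (fun x => h x ^ n * K x) a = 0 := by
  induction k generalizing n K with
  | zero => simp [ha, hkn.ne']
  | succ k ih =>
    obtain ⟨n, rfl⟩ := Nat.exists_eq_add_one_of_ne_zero (Nat.ne_zero_of_lt hkn)
    push_cast at hh hK
    rw [iteratedDeriv_succ',
      (deriv_pow_succ_mul_eventuallyEq n (hh.of_le le_add_self)
        (hK.of_le le_add_self)).iteratedDeriv_eq]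
    exact ih (Nat.lt_of_succ_lt_succ hkn) (hh.of_le le_self_add)
      (contDiffAt_deriv_pow_succ_mul_cofactor n hh hK)

theorem iteratedDeriv_pow_succ_mul_self {n : ℕ} (hh : ContDiffAt 𝕜 (n + 1) h a)
    (hK : ContDiffAt 𝕜 n K a) (ha : h a = 0) :
    iteratedDeriv (n + 1) (fun x => h x ^ (n + 1) * K x) a =
      (n + 1).factorial * deriv h a ^ (n + 1) * K a := by
  induction n generalizing K with
  | zero =>
    have hh' := (hh.differentiableAt (by simp)).hasDerivAt
    simpa [iteratedDeriv_one] using (hasDerivAt_mul_of_eq_zero hh' ha hK.continuousAt).deriv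
  | succ n ih =>
    push_cast at hh hK
    rw [iteratedDeriv_succ',
      (deriv_pow_succ_mul_eventuallyEq (n + 1) (hh.of_le le_add_self)
        (hK.of_le le_add_self)).iteratedDeriv_eq,
      ih (hh.of_le le_self_add)
        (contDiffAt_deriv_pow_succ_mul_cofactor (n + 1) (hh.of_le le_self_add) hK),
      ha, Nat.factorial_succ (n + 1)]
    push_cast
    ring

end PowMul

theorem tendsto_sub_div_sub_pow_succ {u u' : ℝ → ℝ} {a l : ℝ} {n : ℕ}
    (hu : ∀ᶠ x in 𝓝 a, HasDerivAt u (u' x) x)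
    (hl : Tendsto (fun x => u' x / (x - a) ^ n) (𝓝[≠] a) (𝓝 l)) :
    Tendsto (fun x => (u x - u a) / (x - a) ^ (n + 1)) (𝓝[≠] a) (𝓝 (l / (n + 1))) := by
  have tendsto_zero {v : ℝ → ℝ} (hv : ContinuousAt v a) (hva : v a = 0) :
      Tendsto v (𝓝[≠] a) (𝓝 0) := hva ▸ hv.continuousWithinAt.tendsto
  refine HasDerivAt.lhopital_zero_nhdsNE (f' := u') (g' := fun x => (n + 1) * (x - a) ^ n)
    ?_ ?_ ?_ ?_ ?_ ?_
  · exact (hu.mono fun x hx => hx.sub_const _).filter_mono nhdsWithin_le_nhds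
  · refine Eventually.of_forall fun x => ?_
    simpa using ((hasDerivAt_id x).sub_const a).fun_pow (n + 1)
  · filter_upwards [self_mem_nhdsWithin] with x hx
    exact mul_ne_zero n.cast_add_one_ne_zero (pow_ne_zero n (sub_ne_zero.2 hx))
  · exact tendsto_zero (hu.self_of_nhds.continuousAt.sub continuousAt_const) (sub_self _)
  · exact tendsto_zero (by fun_prop) (by simp)
  · exact (hl.div_const _).congr fun x => by rw [div_div, mul_comm]

section ArctanSeries

theorem one_le_radius_ofScalars {𝕜 : Type*} [NontriviallyNormedField 𝕜] {c : ℕ → 𝕜} {C : ℝ}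
    (hc : ∀ n, ‖c n‖ ≤ C) : 1 ≤ (FormalMultilinearSeries.ofScalars 𝕜 c).radius := by
  simpa using (FormalMultilinearSeries.ofScalars 𝕜 c).le_radius_of_bound C (r := 1)
    fun n => by simpa [FormalMultilinearSeries.ofScalars_norm] using hc n

theorem mem_eball_zero_one {E : Type*} [SeminormedAddCommGroup E] {x : E} (hx : ‖x‖ < 1) :
    x ∈ Metric.eball (0 : E) 1 := by
  rw [← ENNReal.ofReal_one, Metric.eball_ofReal]
  simpa using hx

/-- The series `A(t) = ∑ (-1)ⁿ tⁿ / (2n + 1)`, which represents the generalized arctangent as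
`arctan(λ, y) = y A(λ y²)` for `|λ y²| < 1`, whatever the sign of `λ`. It is a junk value where the
series diverges. -/
noncomputable def arctanSeries (t : ℝ) : ℝ :=
  FormalMultilinearSeries.ofScalarsSum (fun n : ℕ => (-1 : ℝ) ^ n / (2 * n + 1)) t

theorem hasFPowerSeriesOnBall_arctanSeries :
    HasFPowerSeriesOnBall arctanSeries
      (FormalMultilinearSeries.ofScalars ℝ fun n : ℕ => (-1 : ℝ) ^ n / (2 * n + 1)) 0 1 := by
  have coeff_bound (n : ℕ) : ‖(-1 : ℝ) ^ n / (2 * n + 1)‖ ≤ 1 := by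
    rw [norm_div, norm_pow, norm_neg, norm_one, one_pow, Real.norm_of_nonneg (by positivity)]
    exact div_le_one_of_le₀ (by linarith [n.cast_nonneg (α := ℝ)]) (by positivity)
  have radius_bound := one_le_radius_ofScalars coeff_bound
  exact (FormalMultilinearSeries.hasFPowerSeriesOnBall _
    (one_pos.trans_le radius_bound)).mono one_pos radius_bound

theorem analyticAt_arctanSeries {t : ℝ} (ht : |t| < 1) : AnalyticAt ℝ arctanSeries t :=
  hasFPowerSeriesOnBall_arctanSeries.analyticAt_of_mem (mem_eball_zero_one ht)

theorem hasSum_arctanSeries {t : ℝ} (ht : |t| < 1) :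
    HasSum (fun n : ℕ => (-1 : ℝ) ^ n / (2 * n + 1) * t ^ n) (arctanSeries t) := by
  simpa [FormalMultilinearSeries.ofScalars_apply_eq, mul_comm] using
    hasFPowerSeriesOnBall_arctanSeries.hasSum (mem_eball_zero_one ht)

theorem arctanSeries_zero : arctanSeries 0 = 1 := by
  simp [arctanSeries]

theorem deriv_arctanSeries_zero : deriv arctanSeries 0 = -1 / 3 := by
  rw [hasFPowerSeriesOnBall_arctanSeries.hasFPowerSeriesAt.deriv]
  norm_num [FormalMultilinearSeries.ofScalars_apply_eq]

theorem mul_arctanSeries_sq {s : ℝ} (hs : |s| < 1) : s * arctanSeries (s ^ 2) = Real.arctan s := by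
  have hs2 : |s ^ 2| < 1 := by rwa [abs_sq, sq_lt_one_iff_abs_lt_one]
  refine ((hasSum_arctanSeries hs2).mul_left s).unique ?_
  convert! Real.hasSum_arctan (x := s) hs using 2 with n
  push_cast
  ring

theorem mul_arctanSeries_neg_sq {s : ℝ} (hs : |s| < 1) : s * arctanSeries (-s ^ 2) = artanh s := by
  have hs2 : |-s ^ 2| < 1 := by rwa [abs_neg, abs_sq, sq_lt_one_iff_abs_lt_one]
  obtain ⟨hs_gt, hs_lt⟩ := abs_lt.1 hs
  refine ((hasSum_arctanSeries hs2).mul_left s).unique ?_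
  rw [artanh, Real.log_div (by linarith) (by linarith)]
  convert! (Real.hasSum_log_sub_log_of_abs_lt_one hs).mul_left (1 / 2) using 2 with n
  have sign_cancel : (-1 : ℝ) ^ n * (-s ^ 2) ^ n = (s ^ 2) ^ n := by
    rw [← mul_pow, neg_one_mul, neg_neg]
  linear_combination s / (2 * n + 1) * sign_cancel

end ArctanSeries

section ArctanGen

variable {l y : ℝ}

theorem arctanGen_zero_left : arctanGen 0 y = y := by
  simp [arctanGen]

theorem arctanGen_of_pos (hl : 0 < l) : arctanGen l y = Real.arctan (√l * y) / √l :=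
  if_pos hl

theorem arctanGen_of_neg (hl : l < 0) : arctanGen l y = artanh (√(-l) * y) / √(-l) := by
  rw [arctanGen, if_neg hl.not_gt, if_pos hl]

theorem sq_sqrt_mul (hl : 0 ≤ l) : (√l * y) ^ 2 = l * y ^ 2 := by
  rw [mul_pow, Real.sq_sqrt hl]

theorem arctanGen_eq_mul_arctanSeries (hly : |l * y ^ 2| < 1) :
    arctanGen l y = y * arctanSeries (l * y ^ 2) := by
  rcases lt_trichotomy l 0 with hl | rfl | hl
  · have hl' : 0 < -l := neg_pos.2 hl
    have hs : |√(-l) * y| < 1 := by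
      rw [← sq_lt_one_iff_abs_lt_one, sq_sqrt_mul hl'.le, neg_mul]
      exact neg_lt.1 (abs_lt.1 hly).1
    rw [arctanGen_of_neg hl, ← mul_arctanSeries_neg_sq hs, sq_sqrt_mul hl'.le, neg_mul, neg_neg]
    field_simp
  · simp [arctanGen_zero_left, arctanSeries_zero]
  · have hs : |√l * y| < 1 := by
      rw [← sq_lt_one_iff_abs_lt_one, sq_sqrt_mul hl.le]
      exact (abs_lt.1 hly).2
    rw [arctanGen_of_pos hl, ← mul_arctanSeries_sq hs, sq_sqrt_mul hl.le]
    field_simp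

theorem hasDerivAt_artanh {s : ℝ} (hs : |s| < 1) : HasDerivAt artanh (1 / (1 - s ^ 2)) s := by
  obtain ⟨hs_gt, hs_lt⟩ := abs_lt.1 hs
  have heq : artanh = fun x => 1 / 2 * Real.log ((1 + x) / (1 - x)) := rfl
  simpa [heq] using Real.hasDerivAt_half_log_one_add_div_one_sub_sub_sum_range 0 hs_gt hs_lt

theorem hasDerivAt_arctanGen (hly : -1 < l * y ^ 2) :
    HasDerivAt (arctanGen l) (1 / (1 + l * y ^ 2)) y := by
  rcases lt_trichotomy l 0 with hl | rfl | hl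
  · have hl' : 0 < -l := neg_pos.2 hl
    have hs : |√(-l) * y| < 1 := by
      rw [← sq_lt_one_iff_abs_lt_one, sq_sqrt_mul hl'.le]
      linarith
    have heq : arctanGen l = fun y => artanh (√(-l) * y) / √(-l) :=
      funext fun _ => arctanGen_of_neg hl
    rw [heq]
    refine (((hasDerivAt_artanh hs).comp y
      (hasDerivAt_const_mul (√(-l)))).div_const (√(-l))).congr_deriv ?_
    rw [mul_div_cancel_right₀ _ (by positivity), sq_sqrt_mul hl'.le, neg_mul, sub_neg_eq_add]
  · simpa [funext fun y => arctanGen_zero_left (y := y)] using hasDerivAt_id' y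
  · have heq : arctanGen l = fun y => Real.arctan (√l * y) / √l :=
      funext fun _ => arctanGen_of_pos hl
    rw [heq]
    refine (((Real.hasDerivAt_arctan _).comp y
      (hasDerivAt_const_mul (√l))).div_const (√l)).congr_deriv ?_
    rw [mul_div_cancel_right₀ _ (by positivity), sq_sqrt_mul hl.le]

section Comp

variable {u v : ℝ → ℝ} {u' v' x : ℝ}

theorem arctanGen_comp_eventuallyEq (hu : ContinuousAt u x) (hv : ContinuousAt v x)
    (hx : |u x * v x ^ 2| < 1) :
    (fun x => arctanGen (u x) (v x)) =ᶠ[𝓝 x] fun x => v x * arctanSeries (u x * v x ^ 2) :=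
  ((hu.mul (hv.pow 2)).abs.eventually_lt_const hx).mono fun _ => arctanGen_eq_mul_arctanSeries

theorem hasDerivAt_arctanGen_comp_arctanSeries (hu : HasDerivAt u u' x) (hv : HasDerivAt v v' x)
    (hx : |u x * v x ^ 2| < 1) :
    HasDerivAt (fun x => arctanGen (u x) (v x))
      (v' * (arctanSeries (u x * v x ^ 2) +
          2 * (u x * v x ^ 2) * deriv arctanSeries (u x * v x ^ 2)) +
        u' * (v x ^ 3 * deriv arctanSeries (u x * v x ^ 2))) x := by
  have hA := (analyticAt_arctanSeries hx).differentiableAt.hasDerivAt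
  have hcomp : HasDerivAt (fun x => arctanSeries (u x * v x ^ 2))
      (deriv arctanSeries (u x * v x ^ 2) * (u' * v x ^ 2 + u x * (2 * v x * v'))) x :=
    hA.comp x (hu.fun_mul (by simpa using hv.fun_pow 2))
  refine ((hv.fun_mul hcomp).congr_of_eventuallyEq
    (arctanGen_comp_eventuallyEq hu.continuousAt hv.continuousAt hx)).congr_deriv ?_
  ring

-- Both sides are the derivative of `arctan(t, y)` in `y` at `y = 1`.
theorem arctanSeries_add_two_mul_deriv {t : ℝ} (ht : |t| < 1) :
    arctanSeries t + 2 * t * deriv arctanSeries t = 1 / (1 + t) := by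
  have via_series := hasDerivAt_arctanGen_comp_arctanSeries (hasDerivAt_const 1 t)
    (hasDerivAt_id 1) (by simpa using ht)
  have direct := hasDerivAt_arctanGen (l := t) (y := 1) (by linarith [(abs_lt.1 ht).1])
  simpa using via_series.unique direct

theorem hasDerivAt_arctanGen_comp (hu : HasDerivAt u u' x) (hv : HasDerivAt v v' x)
    (hx : |u x * v x ^ 2| < 1) :
    HasDerivAt (fun x => arctanGen (u x) (v x))
      (v' / (1 + u x * v x ^ 2) + u' * (v x ^ 3 * deriv arctanSeries (u x * v x ^ 2))) x := by
  have hderiv := hasDerivAt_arctanGen_comp_arctanSeries hu hv hx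
  rwa [arctanSeries_add_two_mul_deriv hx, mul_one_div] at hderiv

end Comp

end ArctanGen

/-- The iteration function `g(x) = x - arctan(Ω(x), h(x))`. The Schwarzian-Newton method is the case
where `Ω = {f, x} / 2` and `h = Φ / Φ'` with `Φ = f / √|f'|`. -/
noncomputable def schwarzNewton (Ω h : ℝ → ℝ) (x : ℝ) : ℝ :=
  x - arctanGen (Ω x) (h x)

/-- The factor `K` in `g' = h³ K`, for `g = schwarzNewton Ω h` and `h` a solution of
`h' = 1 + Ω h²`. -/
noncomputable def schwarzNewtonCofactor (Ω h : ℝ → ℝ) (x : ℝ) : ℝ :=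
  -(deriv Ω x * deriv arctanSeries (Ω x * h x ^ 2))

section Riccati

variable {Ω h : ℝ → ℝ} {α : ℝ}

theorem schwarzNewton_of_eq_zero (hα : h α = 0) : schwarzNewton Ω h α = α := by
  simp [schwarzNewton, arctanGen, artanh, hα]

theorem schwarzNewtonCofactor_of_eq_zero (hα : h α = 0) :
    schwarzNewtonCofactor Ω h α = deriv Ω α / 3 := by
  rw [schwarzNewtonCofactor, hα, zero_pow two_ne_zero, mul_zero, deriv_arctanSeries_zero]
  ring

theorem contDiffAt_schwarzNewtonCofactor {n : WithTop ℕ∞} (hΩ : ContDiffAt ℝ (n + 1) Ω α)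
    (hh : ContDiffAt ℝ n h α) (hα : |Ω α * h α ^ 2| < 1) :
    ContDiffAt ℝ n (schwarzNewtonCofactor Ω h) α := by
  have hA : ContDiffAt ℝ n (deriv arctanSeries) (Ω α * h α ^ 2) :=
    (analyticAt_arctanSeries hα).deriv.contDiffAt
  exact ((hΩ.derivWithin le_rfl).mul
    (hA.comp α ((hΩ.of_le le_self_add).mul (hh.pow 2)))).neg

theorem hasDerivAt_schwarzNewton {x : ℝ} (hΩ : DifferentiableAt ℝ Ω x)
    (hh : HasDerivAt h (1 + Ω x * h x ^ 2) x) (hx : |Ω x * h x ^ 2| < 1) :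
    HasDerivAt (schwarzNewton Ω h) (h x ^ 3 * schwarzNewtonCofactor Ω h x) x := by
  have hne : 1 + Ω x * h x ^ 2 ≠ 0 := by linarith [(abs_lt.1 hx).1]
  refine ((hasDerivAt_id x).sub (hasDerivAt_arctanGen_comp hΩ.hasDerivAt hh hx)).congr_deriv ?_
  rw [div_self hne, schwarzNewtonCofactor]
  ring

theorem hasDerivAt_one_of_riccati (hα : h α = 0)
    (hric : ∀ᶠ x in 𝓝 α, HasDerivAt h (1 + Ω x * h x ^ 2) x) : HasDerivAt h 1 α := by
  simpa [hα] using hric.self_of_nhds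

theorem eventually_hasDerivAt_schwarzNewton (hΩ : ContDiffAt ℝ 1 Ω α) (hα : h α = 0)
    (hric : ∀ᶠ x in 𝓝 α, HasDerivAt h (1 + Ω x * h x ^ 2) x) :
    ∀ᶠ x in 𝓝 α,
      HasDerivAt (schwarzNewton Ω h) (h x ^ 3 * schwarzNewtonCofactor Ω h x) x := by
  have hcont : ContinuousAt (fun x => |Ω x * h x ^ 2|) α :=
    (hΩ.continuousAt.mul (hric.self_of_nhds.continuousAt.pow 2)).abs
  filter_upwards [hΩ.eventually (by simp), hric,
    hcont.eventually_lt_const (u := 1) (by simp [hα])] with x hΩx hhx hx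
  exact hasDerivAt_schwarzNewton (hΩx.differentiableAt one_ne_zero) hhx hx

theorem iteratedDeriv_succ_schwarzNewton (k : ℕ) (hΩ : ContDiffAt ℝ 1 Ω α) (hα : h α = 0)
    (hric : ∀ᶠ x in 𝓝 α, HasDerivAt h (1 + Ω x * h x ^ 2) x) :
    iteratedDeriv (k + 1) (schwarzNewton Ω h) α =
      iteratedDeriv k (fun x => h x ^ 3 * schwarzNewtonCofactor Ω h x) α := by
  have hderiv : deriv (schwarzNewton Ω h) =ᶠ[𝓝 α] fun x => h x ^ 3 * schwarzNewtonCofactor Ω h x :=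
    (eventually_hasDerivAt_schwarzNewton hΩ hα hric).mono fun _ hx => hx.deriv
  rw [iteratedDeriv_succ', hderiv.iteratedDeriv_eq]

theorem iteratedDeriv_succ_schwarzNewton_eq_zero {k : ℕ} (hk : k < 3)
    (hΩ : ContDiffAt ℝ (k + 1) Ω α) (hh : ContDiffAt ℝ k h α) (hα : h α = 0)
    (hric : ∀ᶠ x in 𝓝 α, HasDerivAt h (1 + Ω x * h x ^ 2) x) :
    iteratedDeriv (k + 1) (schwarzNewton Ω h) α = 0 := by
  rw [iteratedDeriv_succ_schwarzNewton k (hΩ.of_le le_add_self) hα hric]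
  exact iteratedDeriv_pow_mul_eq_zero hk hh
    (contDiffAt_schwarzNewtonCofactor hΩ hh (by simp [hα])) hα

theorem iteratedDeriv_four_schwarzNewton (hΩ : ContDiffAt ℝ 3 Ω α) (hh : ContDiffAt ℝ 3 h α)
    (hα : h α = 0) (hric : ∀ᶠ x in 𝓝 α, HasDerivAt h (1 + Ω x * h x ^ 2) x) :
    iteratedDeriv 4 (schwarzNewton Ω h) α = 2 * deriv Ω α := by
  have hK : ContDiffAt ℝ (2 : ℕ) (schwarzNewtonCofactor Ω h) α :=
    contDiffAt_schwarzNewtonCofactor (hΩ.of_le (by norm_num)) (hh.of_le (by norm_num))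
      (by simp [hα])
  rw [iteratedDeriv_succ_schwarzNewton 3 (hΩ.of_le (by norm_num)) hα hric,
    iteratedDeriv_pow_succ_mul_self (n := 2) (hh.of_le (by norm_num)) hK hα,
    (hasDerivAt_one_of_riccati hα hric).deriv, schwarzNewtonCofactor_of_eq_zero hα]
  norm_num [Nat.factorial]
  ring

theorem tendsto_schwarzNewton_sub_div_pow_four (hΩ : ContDiffAt ℝ 1 Ω α) (hα : h α = 0)
    (hric : ∀ᶠ x in 𝓝 α, HasDerivAt h (1 + Ω x * h x ^ 2) x) :
    Tendsto (fun x => (schwarzNewton Ω h x - α) / (x - α) ^ 4) (𝓝[≠] α)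
      (𝓝 (deriv Ω α / 12)) := by
  have hh := hasDerivAt_one_of_riccati hα hric
  have hh0 : ContDiffAt ℝ 0 h α :=
    contDiffAt_zero.2 ⟨_, hric, fun _ hx => hx.continuousAt.continuousWithinAt⟩
  have hK : ContDiffAt ℝ 0 (schwarzNewtonCofactor Ω h) α :=
    contDiffAt_schwarzNewtonCofactor (by simpa using hΩ) hh0 (by simp [hα])
  have hlim := tendsto_sub_div_sub_pow_succ (eventually_hasDerivAt_schwarzNewton hΩ hα hric)
    (tendsto_pow_mul_div_sub_pow 3 hh hα hK.continuousAt)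
  rw [schwarzNewton_of_eq_zero hα, schwarzNewtonCofactor_of_eq_zero hα] at hlim
  convert hlim using 2
  push_cast
  ring

end Riccati

/-- The correction `h = f / (f' - f'' f / (2 f'))` of Halley's method, which equals `Φ / Φ'` for
`Φ = f / √|f'|`. -/
noncomputable def halleyCorrection (f : ℝ → ℝ) (x : ℝ) : ℝ :=
  f x / (deriv f x - deriv (deriv f) x * f x / (2 * deriv f x))

section Halley

variable {f : ℝ → ℝ} {x : ℝ} {n : WithTop ℕ∞}

theorem contDiffAt_deriv_deriv (hf : ContDiffAt ℝ (n + 2) f x) :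
    ContDiffAt ℝ n (deriv (deriv f)) x :=
  (hf.derivWithin (m := n + 1) (by rw [add_assoc, one_add_one_eq_two])).derivWithin le_rfl

theorem contDiffAt_schwarzian (hf : ContDiffAt ℝ (n + 3) f x) (hf' : deriv f x ≠ 0) :
    ContDiffAt ℝ n (schwarzian f) x := by
  have hf1 : ContDiffAt ℝ (n + 2) (deriv f) x :=
    hf.derivWithin (by rw [add_assoc, two_add_one_eq_three])
  have hf2 : ContDiffAt ℝ n (deriv (deriv f)) x :=
    hf1.derivWithin (by gcongr; exact one_le_two)
  exact ((contDiffAt_deriv_deriv hf1).div (hf1.of_le le_self_add) hf').sub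
    (contDiffAt_const.mul ((hf2.div (hf1.of_le le_self_add) hf').pow 2))

theorem contDiffAt_halleyCorrection (hf : ContDiffAt ℝ (n + 2) f x) (hf' : deriv f x ≠ 0)
    (hden : deriv f x - deriv (deriv f) x * f x / (2 * deriv f x) ≠ 0) :
    ContDiffAt ℝ n (halleyCorrection f) x := by
  have hf0 : ContDiffAt ℝ n f x := hf.of_le le_self_add
  have hf1 : ContDiffAt ℝ n (deriv f) x := hf.derivWithin (by gcongr; exact one_le_two)
  exact hf0.div (hf1.sub (((contDiffAt_deriv_deriv hf).mul hf0).div (contDiffAt_const.mul hf1)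
    (mul_ne_zero two_ne_zero hf'))) hden

theorem hasDerivAt_halleyCorrection (hf : ContDiffAt ℝ 3 f x) (hf' : deriv f x ≠ 0)
    (hden : deriv f x - deriv (deriv f) x * f x / (2 * deriv f x) ≠ 0) :
    HasDerivAt (halleyCorrection f)
      (1 + 1 / 2 * schwarzian f x * halleyCorrection f x ^ 2) x := by
  have h0 := (hf.differentiableAt three_ne_zero).hasDerivAt
  have hf1 : ContDiffAt ℝ 2 (deriv f) x := hf.derivWithin (by norm_num)
  have h1 := (hf1.differentiableAt two_ne_zero).hasDerivAt
  have hf2 : ContDiffAt ℝ 1 (deriv (deriv f)) x := hf1.derivWithin (by norm_num)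
  have h2 := (hf2.differentiableAt one_ne_zero).hasDerivAt
  refine (h0.fun_div (h1.fun_sub ((h2.fun_mul h0).fun_div (h1.const_mul 2)
    (mul_ne_zero two_ne_zero hf'))) hden).congr_deriv ?_
  rw [halleyCorrection, schwarzian, div_pow (f x), mul_div_assoc',
    one_add_div (pow_ne_zero 2 hden)]
  congr 1
  field_simp
  ring

theorem eventually_hasDerivAt_halleyCorrection (hf : ContDiffAt ℝ 3 f x) (hf' : deriv f x ≠ 0)
    (hx : f x = 0) :
    ∀ᶠ y in 𝓝 x, HasDerivAt (halleyCorrection f)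
      (1 + 1 / 2 * schwarzian f y * halleyCorrection f y ^ 2) y := by
  have hf1 : ContDiffAt ℝ 2 (deriv f) x := hf.derivWithin (by norm_num)
  have hf2 : ContDiffAt ℝ 1 (deriv (deriv f)) x := hf1.derivWithin (by norm_num)
  have hden : ContinuousAt (fun y => deriv f y - deriv (deriv f) y * f y / (2 * deriv f y)) x :=
    hf1.continuousAt.sub ((hf2.continuousAt.mul hf.continuousAt).div
      (continuousAt_const.mul hf1.continuousAt) (mul_ne_zero two_ne_zero hf'))
  filter_upwards [hf.eventually (by simp), hf1.continuousAt.eventually_ne hf',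
    hden.eventually_ne (y := 0) (by simpa [hx] using hf')] with y hfy hfy' hdeny
  exact hasDerivAt_halleyCorrection hfy hfy' hdeny

end Halley

theorem stmt8_general (f : ℝ → ℝ) (α : ℝ) (hf : ContDiffAt ℝ 6 f α) (hfα : f α = 0)
    (hf' : deriv f α ≠ 0) (Ω : ℝ → ℝ) (hΩdef : ∀ x, Ω x = 1 / 2 * schwarzian f x)
    (h g : ℝ → ℝ)
    (hh : ∀ x, h x = f x / (deriv f x - deriv (deriv f) x * f x / (2 * deriv f x)))
    (hg : ∀ x, g x = x - arctanGen (Ω x) (h x)) :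
    g α = α ∧ deriv g α = 0 ∧ deriv (deriv g) α = 0 ∧ deriv (deriv (deriv g)) α = 0 ∧
    deriv (deriv (deriv (deriv g))) α = 2 * deriv Ω α ∧
    Tendsto (fun x => (g x - α) / (x - α) ^ 4) (𝓝[≠] α) (𝓝 (deriv Ω α / 12)) := by
  obtain rfl : h = halleyCorrection f := funext hh
  obtain rfl : g = schwarzNewton Ω (halleyCorrection f) := funext hg
  have hΩ : ContDiffAt ℝ 3 Ω α :=
    funext hΩdef ▸ contDiffAt_const.mul (contDiffAt_schwarzian (hf.of_le (by norm_num)) hf')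
  have hh3 : ContDiffAt ℝ 3 (halleyCorrection f) α :=
    contDiffAt_halleyCorrection (hf.of_le (by norm_num)) hf' (by simpa [hfα] using hf')
  have hα : halleyCorrection f α = 0 := by simp [halleyCorrection, hfα]
  have hric : ∀ᶠ x in 𝓝 α, HasDerivAt (halleyCorrection f)
      (1 + Ω x * halleyCorrection f x ^ 2) x := by
    simpa only [hΩdef] using
      eventually_hasDerivAt_halleyCorrection (hf.of_le (by norm_num)) hf' hfα
  have iteratedDeriv_eq_zero (k : ℕ) (hk : k < 3) :
      iteratedDeriv (k + 1) (schwarzNewton Ω (halleyCorrection f)) α = 0 :=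
    iteratedDeriv_succ_schwarzNewton_eq_zero hk
      (hΩ.of_le (by exact_mod_cast hk)) (hh3.of_le (by exact_mod_cast hk.le)) hα hric
  exact ⟨schwarzNewton_of_eq_zero hα,
    by simpa [iteratedDeriv_succ] using iteratedDeriv_eq_zero 0 (by norm_num),
    by simpa [iteratedDeriv_succ] using iteratedDeriv_eq_zero 1 (by norm_num),
    by simpa [iteratedDeriv_succ] using iteratedDeriv_eq_zero 2 (by norm_num),
    by simpa [iteratedDeriv_succ] using iteratedDeriv_four_schwarzNewton hΩ hh3 hα hric,
    tendsto_schwarzNewton_sub_div_pow_four (hΩ.of_le (by norm_num)) hα hric⟩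

/-- If `α` is a simple zero of a smooth `f` and `Ω = (1/2){f,x}` is `C¹` near `α`, then the
Schwarzian-Newton iteration function `g(x) = x - arctan(Ω(x), h(x))`, with
`h = f/(f' - f''f/(2f'))`, satisfies `g(α) = α`, `g'(α) = g''(α) = g'''(α) = 0`,
`g⁽⁴⁾(α) = 2Ω'(α)`; hence the method is of order four with error relation
`ε_{n+1} = (Ω'(α)/12) ε_n⁴ + O(ε_n⁵)`. -/
theorem stmt8 (f : ℝ → ℝ) (hf : ContDiff ℝ (⊤ : ℕ∞) f)
    (α : ℝ) (hfα : f α = 0) (hf' : deriv f α ≠ 0)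
    (Ω : ℝ → ℝ) (hΩdef : ∀ x, Ω x = (1/2) * schwarzian f x)
    (hΩ : ContDiffAt ℝ 1 Ω α)
    (h g : ℝ → ℝ)
    (hh : ∀ x, h x = f x / (deriv f x - deriv (deriv f) x * f x / (2 * deriv f x)))
    (hg : ∀ x, g x = x - arctanGen (Ω x) (h x)) :
    g α = α ∧ deriv g α = 0 ∧ deriv (deriv g) α = 0 ∧ deriv (deriv (deriv g)) α = 0 ∧
    deriv (deriv (deriv (deriv g))) α = 2 * deriv Ω α ∧
    Filter.Tendsto (fun x => (g x - α) / (x - α) ^ 4) (nhdsWithin α {α}ᶜ)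
      (nhds (deriv Ω α / 12)) := by
  exact stmt8_general f α (contDiff_infty.1 hf 6).contDiffAt hfα hf' Ω hΩdef h g hh hg
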